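/- arXiv:2002.08824 — 2 statements merged into one kernel-verified Lean document; each statement's English description precedes it below -/
import Mathlib

section
/- (Wei duality for greedy weights of matroids.) Let M be a matroid of rank n−k on a ground set E of cardinality n, with bottom-up greedy weights (e_1,…,e_k), and let (ẽ̄_1,…,ẽ̄_{n−k}) be the top-down greedy weights of the dual matroid M̄. Then {e_1,…,e_k} ∪ { n+1−ẽ̄_1, …, n+1−ẽ̄_{n−k} } = {1,…,n}. -/
open Finset

/-- A matroid on ground set `Fin n`, given by its rank function. -/
structure MatroidRk (n : ℕ) where
  r : Finset (Fin n) → ℕ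
  r_le_card : ∀ X, r X ≤ X.card
  r_mono : ∀ ⦃X Y : Finset (Fin n)⦄, X ⊆ Y → r X ≤ r Y
  r_submod : ∀ X Y, r (X ∩ Y) + r (X ∪ Y) ≤ r X + r Y

namespace MatroidRk

variable {n : ℕ}

/-- The nullity function `n(X) = |X| - r(X)`. -/
def nul (M : MatroidRk n) (X : Finset (Fin n)) : ℕ := X.card - M.r X

/-- `X ∈ N_i`: `X` is inclusion-minimal among the subsets of nullity `i`. -/
def Nmin (M : MatroidRk n) (i : ℕ) (X : Finset (Fin n)) : Prop :=
  M.nul X = i ∧ ∀ Y ⊆ X, M.nul Y = i → Y = X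

/-- Membership in `Σ`: a chain `σ₁ ⊊ ⋯ ⊊ σ_k` with `σ_i ∈ 𝒩_i`. -/
def SigmaChain (M : MatroidRk n) (k : ℕ) (σ : Fin k → Finset (Fin n)) : Prop :=
  StrictMono σ ∧ ∀ i : Fin k, M.nul (σ i) = (i : ℕ) + 1

/-- Membership in `Σ'`: a chain `σ₁ ⊊ ⋯ ⊊ σ_k` with `σ_i ∈ N_i`. -/
def SigmaChain' (M : MatroidRk n) (k : ℕ) (σ : Fin k → Finset (Fin n)) : Prop :=
  StrictMono σ ∧ ∀ i : Fin k, M.Nmin ((i : ℕ) + 1) (σ i)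

/-- The set `{e(S) : S ∈ Σ}` of tuples of cardinalities of chains in `Σ`. -/
def eSet (M : MatroidRk n) (k : ℕ) : Set (Fin k → ℕ) :=
  {u | ∃ σ : Fin k → Finset (Fin n), M.SigmaChain k σ ∧ ∀ i, (σ i).card = u i}

/-- The set `{e(S) : S ∈ Σ'}`. -/
def eSet' (M : MatroidRk n) (k : ℕ) : Set (Fin k → ℕ) :=
  {u | ∃ σ : Fin k → Finset (Fin n), M.SigmaChain' k σ ∧ ∀ i, (σ i).card = u i}

/-- The generalized Hamming weight `d_i = min {|σ| : σ ∈ 𝒩_i}`. -/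
noncomputable def dW (M : MatroidRk n) (i : ℕ) : ℕ :=
  sInf {c | ∃ X, M.nul X = i ∧ X.card = c}

end MatroidRk

/-- `w` is the lexicographically smallest element of `A`. -/
def IsLexMin {k : ℕ} (A : Set (Fin k → ℕ)) (w : Fin k → ℕ) : Prop :=
  w ∈ A ∧ ∀ u ∈ A, toLex w ≤ toLex u

/-- `w` is the reverse-lexicographically smallest element of `A`. -/
def IsRevLexMin {k : ℕ} (A : Set (Fin k → ℕ)) (w : Fin k → ℕ) : Prop :=
  w ∈ A ∧ ∀ u ∈ A, toLex (w ∘ Fin.rev) ≤ toLex (u ∘ Fin.rev)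

namespace MatroidRk

/-- The rank function of the dual matroid: `r̄(X) = |X| + r(E∖X) - r(E)`. -/
def rDual {n : ℕ} (M : MatroidRk n) (X : Finset (Fin n)) : ℕ :=
  X.card + M.r Xᶜ - M.r Finset.univ

/-- The nullity function of the dual matroid: `n̄(X) = |X| - r̄(X)`. -/
def nulDual {n : ℕ} (M : MatroidRk n) (X : Finset (Fin n)) : ℕ :=
  X.card - M.rDual X

end MatroidRk

open MatroidRk in
/-- The set `{e(S) : S ∈ Σ(M̄)}` for the dual matroid `M̄`, whose chains have `σ_j` of dual
nullity `j`. -/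
def eSetDual {n : ℕ} (M : MatroidRk n) (l : ℕ) : Set (Fin l → ℕ) :=
  {u | ∃ σ : Fin l → Finset (Fin n),
    (StrictMono σ ∧ ∀ j : Fin l, M.nulDual (σ j) = (j : ℕ) + 1) ∧ ∀ j, (σ j).card = u j}

/-!
Order the ground set and follow the resulting complete flag of subsets. Each of its `n` steps raises
exactly one of the nullity and the rank, by one. The members reached by the steps of the first kind
form a chain in `Σ`. Reversing the ordering replaces the members of the flag by their complements,
and the steps that raise the rank of `M` become the steps that raise the nullity of the dual, the
step to cardinality `e` becoming the step to cardinality `n + 1 - e`. Hence a single ordering yields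
weights of `M` and of its dual for which the partition of `{1, …, n}` is clear.

Refining a chain to a complete flag can only decrease its tuple, so both greedy tuples come from
orderings. Lexicographically minimizing the nullity jumps amounts to lexicographically maximizing
their complement, the rank jumps, and the latter is what the top-down condition on the dual says. So
one ordering serves for both tuples.
-/

section OrderEmbOfFin

variable {α β ι : Type*} [LinearOrder α] {k l : ℕ} {s t : Finset α}

lemma lt_card_filter_iff_apply_orderEmbOfFin (hs : #s = k) {p : α → Prop} [DecidablePred p]
    (hp : ∀ ⦃a b⦄, a ≤ b → p b → p a) (i : Fin k) :
    (i : ℕ) < #{a ∈ s | p a} ↔ p (s.orderEmbOfFin hs i) := by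
  rw [← Fin.lt_card_filter_univ_iff_apply_of_imp (fun j => p (s.orderEmbOfFin hs j))
    fun _ _ hji => hp ((s.orderEmbOfFin hs).monotone hji)]
  conv_lhs => rw [← map_orderEmbOfFin_univ s hs, filter_map, card_map]
  rfl

lemma toLex_orderEmbOfFin_lt_of_agree_below {a : α} (hs : #s = k) (ht : #t = k) (has : a ∈ s)
    (hat : a ∉ t) (hst : ∀ b < a, b ∈ s ↔ b ∈ t) :
    toLex ⇑(s.orderEmbOfFin hs) < toLex ⇑(t.orderEmbOfFin ht) := by
  have le_iff_le (b : α) (hb : b < a) (j : Fin k) :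
      s.orderEmbOfFin hs j ≤ b ↔ t.orderEmbOfFin ht j ≤ b := by
    have filter_eq : {c ∈ s | c ≤ b} = {c ∈ t | c ≤ b} := by
      ext c
      simp only [mem_filter, and_congr_left_iff]
      exact fun hc => hst c (hc.trans_lt hb)
    rw [← lt_card_filter_iff_apply_orderEmbOfFin hs (fun _ _ => le_trans),
      ← lt_card_filter_iff_apply_orderEmbOfFin ht (fun _ _ => le_trans), filter_eq]
  obtain ⟨i, rfl⟩ : ∃ i, s.orderEmbOfFin hs i = a := by
    rwa [← Set.mem_range, range_orderEmbOfFin, mem_coe]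
  refine ⟨i, fun j hji => ?_, ?_⟩
  · have hsj := (s.orderEmbOfFin hs).strictMono hji
    have hle := (le_iff_le _ hsj j).1 le_rfl
    exact ((le_iff_le _ (hle.trans_lt hsj) j).2 le_rfl).antisymm hle
  · refine lt_of_le_of_ne (le_of_not_gt fun h => h.not_ge ((le_iff_le _ h i).2 le_rfl)) fun h => ?_
    have h : s.orderEmbOfFin hs i = t.orderEmbOfFin ht i := h
    exact hat (h ▸ t.orderEmbOfFin_mem ht i)

lemma toLex_orderEmbOfFin_compl_le [Fintype α] (hs : #s = k) (ht : #t = k) (hs' : #sᶜ = l)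
    (ht' : #tᶜ = l) (hst : toLex ⇑(s.orderEmbOfFin hs) ≤ toLex ⇑(t.orderEmbOfFin ht)) :
    toLex ⇑(tᶜ.orderEmbOfFin ht') ≤ toLex ⇑(sᶜ.orderEmbOfFin hs') := by
  obtain rfl | hne := eq_or_ne s t
  · exact le_rfl
  obtain ⟨a, ha, hmin⟩ := (symmDiff s t).exists_min_image id (symmDiff_nonempty.2 hne)
  have agree (b : α) (hb : b < a) : b ∈ s ↔ b ∈ t := by
    by_contra h
    exact hb.not_ge (hmin b (by grind [mem_symmDiff]))
  obtain ⟨has, hat⟩ | ⟨hat, has⟩ := mem_symmDiff.1 ha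
  · exact (toLex_orderEmbOfFin_lt_of_agree_below ht' hs' (mem_compl.2 hat) (by simpa using has)
      (by simpa [not_iff_not, iff_comm] using agree)).le
  · have agree' (b : α) (hb : b < a) : b ∈ t ↔ b ∈ s := (agree b hb).symm
    exact absurd (toLex_orderEmbOfFin_lt_of_agree_below ht hs hat has agree') hst.not_gt

lemma toLex_comp_le_iff_of_strictMono [LinearOrder β] [LinearOrder ι] [WellFoundedLT ι]
    {f : α → β} (hf : StrictMono f) {u v : ι → α} :
    toLex (f ∘ u) ≤ toLex (f ∘ v) ↔ toLex u ≤ toLex v := by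
  rw [← not_lt, ← not_lt]
  refine not_congr (exists_congr fun i => and_congr (forall₂_congr fun j _ => ?_) hf.lt_iff_lt)
  exact hf.injective.eq_iff

lemma toLex_comp_le_iff_of_strictAnti [LinearOrder β] [LinearOrder ι] [WellFoundedLT ι]
    {f : α → β} (hf : StrictAnti f) {u v : ι → α} :
    toLex (f ∘ u) ≤ toLex (f ∘ v) ↔ toLex v ≤ toLex u := by
  rw [← not_lt, ← not_lt]
  refine not_congr (exists_congr fun i => and_congr (forall₂_congr fun j _ => ?_) hf.lt_iff_gt)
  exact hf.injective.eq_iff.trans eq_comm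

end OrderEmbOfFin

section Flag

variable {α ι : Type*} [Fintype α] {n : ℕ}

/-- The complete flag of subsets of `α` attached to an ordering `π` of `α`: its `m`-th member
consists of the first `m` elements. Every complete flag arises in this way. -/
def orderingFlag (π : α ≃ Fin n) (m : ℕ) : Finset α := {a | (π a : ℕ) < m}

lemma mem_orderingFlag {π : α ≃ Fin n} {m : ℕ} {a : α} :
    a ∈ orderingFlag π m ↔ (π a : ℕ) < m := by
  simp [orderingFlag]

lemma orderingFlag_mono (π : α ≃ Fin n) : Monotone (orderingFlag π) := fun _ _ h _ => by
  simpa only [mem_orderingFlag] using h.trans_lt'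

lemma card_orderingFlag (π : α ≃ Fin n) {m : ℕ} (hm : m ≤ n) : #(orderingFlag π m) = m := by
  have : (orderingFlag π m).map π.toEmbedding = ({x | (x : ℕ) < m} : Finset (Fin n)) := by
    ext x; simp [mem_orderingFlag]
  rw [← card_map π.toEmbedding, this, Fin.card_filter_val_lt, min_eq_right hm]

lemma orderingFlag_trans_revPerm [DecidableEq α] (π : α ≃ Fin n) {m : ℕ} (hm : m ≤ n) :
    orderingFlag (π.trans Fin.revPerm) m = (orderingFlag π (n - m))ᶜ := by
  ext a
  simp only [mem_compl, mem_orderingFlag, Equiv.trans_apply, Fin.revPerm_apply, Fin.val_rev]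
  omega

lemma orderingFlag_card_eq (π : α ≃ Fin n) {s : Finset α}
    (hs : ∀ ⦃a b⦄, a ∈ s → π b ≤ π a → b ∈ s) : orderingFlag π #s = s := by
  have hsn : #s ≤ n := by
    simpa [Fintype.card_congr π] using card_le_univ s
  refine (eq_of_subset_of_card_le (fun a ha => ?_) (card_orderingFlag π hsn).le).symm
  have hsub : orderingFlag π (π a + 1) ⊆ s := fun b hb =>
    hs ha (Nat.le_of_lt_succ (mem_orderingFlag.1 hb))
  have := card_le_card hsub
  rw [card_orderingFlag π (π a).isLt] at this
  exact mem_orderingFlag.2 this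

lemma exists_orderingFlag_card_eq [Finite ι] [LinearOrder ι] (hα : Fintype.card α = n)
    {σ : ι → Finset α} (hσ : Monotone σ) :
    ∃ π : α ≃ Fin n, ∀ i, orderingFlag π #(σ i) = σ i := by
  classical
  have := Fintype.ofFinite ι
  -- Sorting by `missing` lists every member of the chain before the elements outside it.
  let missing (a : α) : ℕ := #{i | a ∉ σ i}
  have mem_of_missing_le {i : ι} {a b : α} (ha : a ∈ σ i) (hba : missing b ≤ missing a) :
      b ∈ σ i := by
    by_contra hb
    refine hba.not_gt (card_lt_card ((ssubset_iff_of_subset fun j hj => ?_).2 ⟨i, ?_⟩))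
    · have haj : a ∉ σ j := by simpa using hj
      have hji : j ≤ i := le_of_not_ge fun hij => haj (hσ hij ha)
      simpa using fun hbj => hb (hσ hji hbj)
    · simpa using ⟨hb, ha⟩
  let e := Fintype.equivFinOfCardEq hα
  let τ := Tuple.sort (missing ∘ e.symm)
  refine ⟨e.trans τ.symm, fun i => orderingFlag_card_eq _ fun a b ha hba =>
    mem_of_missing_le ha ?_⟩
  simpa [τ] using Tuple.monotone_sort (missing ∘ e.symm) hba

end Flag

namespace MatroidRk

variable {n k l : ℕ}

lemma nul_add_r (M : MatroidRk n) (X : Finset (Fin n)) : M.nul X + M.r X = #X :=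
  Nat.sub_add_cancel (M.r_le_card X)

lemma r_add_card_le (M : MatroidRk n) {X Y : Finset (Fin n)} (h : X ⊆ Y) :
    M.r Y + #X ≤ M.r X + #Y := by
  have hsubmod := M.r_submod X (Y \ X)
  rw [union_sdiff_of_subset h] at hsubmod
  have hcard := M.r_le_card (Y \ X)
  have := card_sdiff_add_card_eq_card h
  omega

lemma nul_mono (M : MatroidRk n) : Monotone M.nul := fun X Y h => by
  have := M.r_add_card_le h
  have := M.nul_add_r X
  have := M.nul_add_r Y
  omega

/-- The dual matroid, with rank function `rDual`. -/
def dual (M : MatroidRk n) : MatroidRk n where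
  r := M.rDual
  r_le_card X := by
    have := M.r_mono (subset_univ Xᶜ)
    unfold rDual
    omega
  r_mono X Y h := by
    have := M.r_add_card_le (compl_subset_compl.2 h)
    have := card_add_card_compl X
    have := card_add_card_compl Y
    unfold rDual
    omega
  r_submod X Y := by
    have hsubmod := M.r_submod Xᶜ Yᶜ
    rw [← compl_union, ← compl_inter] at hsubmod
    have hcard := card_inter_add_card_union X Y
    have huniv (Z : Finset (Fin n)) : M.r univ ≤ #Z + M.r Zᶜ := by
      have := M.r_add_card_le (subset_univ Zᶜ)
      have := card_add_card_compl Z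
      rw [← card_univ] at this
      omega
    have := huniv X
    have := huniv Y
    have := huniv (X ∩ Y)
    have := huniv (X ∪ Y)
    unfold rDual
    omega

lemma nul_dual_add_r_compl (M : MatroidRk n) (X : Finset (Fin n)) :
    M.dual.nul X + M.r Xᶜ = M.r univ := by
  have := M.r_mono (subset_univ Xᶜ)
  have := M.r_add_card_le (subset_univ Xᶜ)
  have := card_add_card_compl X
  rw [← card_univ] at this
  unfold nul dual rDual
  dsimp only
  omega

lemma nul_dual_univ (M : MatroidRk n) : M.dual.nul univ = M.r univ := by
  have := M.nul_dual_add_r_compl univ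
  have := M.r_le_card ∅
  simp_all

lemma eSetDual_eq_eSet_dual (M : MatroidRk n) : eSetDual M l = M.dual.eSet l := rfl

/-- The steps of the complete flag attached to `π` at which the nullity increases; step `x` leads
from the `x`-th member of the flag to the next one. -/
def nullityJumps (M : MatroidRk n) (π : Fin n ≃ Fin n) : Finset (Fin n) :=
  {x | M.nul (orderingFlag π x) < M.nul (orderingFlag π (x + 1))}

lemma nul_orderingFlag_succ (M : MatroidRk n) (π : Fin n ≃ Fin n) (x : Fin n) :
    M.nul (orderingFlag π (x + 1)) =
      M.nul (orderingFlag π x) + if x ∈ M.nullityJumps π then 1 else 0 := by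
  have hsub : orderingFlag π x ⊆ orderingFlag π (x + 1) := orderingFlag_mono π (Nat.le_succ x)
  have := M.r_mono hsub
  have := M.nul_mono hsub
  have hx := M.nul_add_r (orderingFlag π x)
  have hx' := M.nul_add_r (orderingFlag π (x + 1))
  rw [card_orderingFlag π x.isLt.le] at hx
  rw [card_orderingFlag π x.isLt] at hx'
  simp only [nullityJumps, mem_filter_univ]
  split_ifs <;> omega

lemma nul_orderingFlag (M : MatroidRk n) (π : Fin n ≃ Fin n) {m : ℕ} (hm : m ≤ n) :
    M.nul (orderingFlag π m) = #{x ∈ M.nullityJumps π | x.val < m} := by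
  induction m with
  | zero => simp [nul, orderingFlag]
  | succ m ih =>
    obtain ⟨x, rfl⟩ : ∃ x : Fin n, x.val = m := ⟨⟨m, hm⟩, rfl⟩
    rw [M.nul_orderingFlag_succ π x, ih (Nat.le_of_succ_le hm)]
    have lt_succ_iff (y : Fin n) : y.val < x + 1 ↔ y < x ∨ y = x := by
      rw [Nat.lt_succ_iff_lt_or_eq, Fin.ext_iff, Fin.lt_def]
    have hdisj : Disjoint {y ∈ M.nullityJumps π | y < x} {y ∈ M.nullityJumps π | y = x} :=
      disjoint_filter.2 fun _ _ => ne_of_lt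
    simp only [lt_succ_iff, filter_or]
    rw [card_union_of_disjoint hdisj, filter_eq', apply_ite card, card_singleton, card_empty]
    rfl

lemma card_nullityJumps (M : MatroidRk n) (hk : M.nul univ = k) (π : Fin n ≃ Fin n) :
    #(M.nullityJumps π) = k := by
  have := M.nul_orderingFlag π le_rfl
  simpa [orderingFlag, hk] using this.symm

lemma card_nullityJumps_compl (M : MatroidRk n) (hl : M.r univ = l) (π : Fin n ≃ Fin n) :
    #(M.nullityJumps π)ᶜ = l := by
  have := M.nul_add_r univ
  rw [card_compl, M.card_nullityJumps rfl, ← card_univ, ← this, hl, add_tsub_cancel_left]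

/-- The cardinalities of the members of the complete flag attached to `π` at which the nullity
reaches `1, …, k`, where `k` is the nullity of the ground set. The shift by one turns the index of
a step into the cardinality of the set it leads to. -/
def flagWeights (M : MatroidRk n) (hk : M.nul univ = k) (π : Fin n ≃ Fin n) : Fin k → ℕ :=
  fun i => (M.nullityJumps π).orderEmbOfFin (M.card_nullityJumps hk π) i + 1

lemma flagWeights_le_card (M : MatroidRk n) (hk : M.nul univ = k) (π : Fin n ≃ Fin n)
    (i : Fin k) : M.flagWeights hk π i ≤ n :=
  Fin.isLt _

lemma flagWeights_strictMono (M : MatroidRk n) (hk : M.nul univ = k) (π : Fin n ≃ Fin n) :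
    StrictMono (M.flagWeights hk π) := fun _ _ h =>
  Nat.succ_lt_succ (Fin.lt_def.1 ((orderEmbOfFin _ _).strictMono h))

lemma flagWeights_le_iff (M : MatroidRk n) (hk : M.nul univ = k) (π : Fin n ≃ Fin n) (i : Fin k)
    {m : ℕ} (hm : m ≤ n) :
    M.flagWeights hk π i ≤ m ↔ (i : ℕ) < M.nul (orderingFlag π m) := by
  rw [M.nul_orderingFlag π hm,
    lt_card_filter_iff_apply_orderEmbOfFin (M.card_nullityJumps hk π)
      fun _ _ hab => (Fin.le_def.1 hab).trans_lt]
  rfl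

lemma nul_orderingFlag_flagWeights (M : MatroidRk n) (hk : M.nul univ = k) (π : Fin n ≃ Fin n)
    (i : Fin k) : M.nul (orderingFlag π (M.flagWeights hk π i)) = i + 1 := by
  have lt_nul_iff (j : Fin k) :
      (j : ℕ) < M.nul (orderingFlag π (M.flagWeights hk π i)) ↔ j ≤ i := by
    rw [← M.flagWeights_le_iff hk π j (M.flagWeights_le_card hk π i),
      (M.flagWeights_strictMono hk π).le_iff_le]
  have hlt := (lt_nul_iff i).2 le_rfl
  have hle : M.nul (orderingFlag π (M.flagWeights hk π i)) ≤ k :=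
    (M.nul_mono (subset_univ _)).trans_eq hk
  by_contra hne
  have := (lt_nul_iff ⟨i + 1, by omega⟩).1 (by simp only; omega)
  simp [Fin.le_def] at this

lemma flagWeights_mem_eSet (M : MatroidRk n) (hk : M.nul univ = k) (π : Fin n ≃ Fin n) :
    M.flagWeights hk π ∈ M.eSet k := by
  have card_eq (i : Fin k) := card_orderingFlag π (M.flagWeights_le_card hk π i)
  refine ⟨fun i => orderingFlag π (M.flagWeights hk π i), ⟨?_, ?_⟩, card_eq⟩
  · refine ((orderingFlag_mono π).comp (M.flagWeights_strictMono hk π).monotone)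
      |>.strictMono_of_injective fun i j hij => (M.flagWeights_strictMono hk π).injective ?_
    rw [← card_eq i, ← card_eq j]
    exact congrArg card hij
  · exact M.nul_orderingFlag_flagWeights hk π

lemma exists_flagWeights_le (M : MatroidRk n) (hk : M.nul univ = k) {u : Fin k → ℕ}
    (hu : u ∈ M.eSet k) : ∃ π, M.flagWeights hk π ≤ u := by
  obtain ⟨σ, ⟨hσ, hnul⟩, hcard⟩ := hu
  obtain ⟨π, hπ⟩ := exists_orderingFlag_card_eq (Fintype.card_fin n) hσ.monotone
  refine ⟨π, fun i => ?_⟩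
  rw [← hcard i, M.flagWeights_le_iff hk π i (card_finset_fin_le _), hπ, hnul]
  exact Nat.lt_succ_self _

lemma exists_eq_flagWeights_of_isLexMin (M : MatroidRk n) (hk : M.nul univ = k) {w : Fin k → ℕ}
    (hw : IsLexMin (M.eSet k) w) : ∃ π, w = M.flagWeights hk π := by
  obtain ⟨π, hπ⟩ := M.exists_flagWeights_le hk hw.1
  exact ⟨π, toLex.injective
    ((hw.2 _ (M.flagWeights_mem_eSet hk π)).antisymm (Pi.toLex_monotone hπ))⟩

lemma exists_eq_flagWeights_of_isRevLexMin (M : MatroidRk n) (hk : M.nul univ = k)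
    {w : Fin k → ℕ} (hw : IsRevLexMin (M.eSet k) w) : ∃ π, w = M.flagWeights hk π := by
  obtain ⟨π, hπ⟩ := M.exists_flagWeights_le hk hw.1
  refine ⟨π, Fin.rev_surjective.injective_comp_right (toLex.injective
    ((hw.2 _ (M.flagWeights_mem_eSet hk π)).antisymm
      (Pi.toLex_monotone fun i => hπ i.rev)))⟩

lemma nul_dual_orderingFlag_trans_revPerm_add_r (M : MatroidRk n) (π : Fin n ≃ Fin n) {m : ℕ}
    (hm : m ≤ n) :
    M.dual.nul (orderingFlag (π.trans Fin.revPerm) m) + M.r (orderingFlag π (n - m)) =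
      M.r univ := by
  have := M.nul_dual_add_r_compl (orderingFlag π (n - m))ᶜ
  rwa [compl_compl, ← orderingFlag_trans_revPerm π hm] at this

lemma rev_mem_nullityJumps_dual_iff (M : MatroidRk n) (π : Fin n ≃ Fin n) (x : Fin n) :
    x.rev ∈ M.dual.nullityJumps (π.trans Fin.revPerm) ↔ x ∉ M.nullityJumps π := by
  have hrev := M.nul_dual_orderingFlag_trans_revPerm_add_r π x.rev.isLt.le
  have hrev' := M.nul_dual_orderingFlag_trans_revPerm_add_r π x.rev.isLt
  have hval : n - x.rev = x + 1 := by rw [Fin.val_rev]; omega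
  have hval' : n - (x.rev + 1) = x := by rw [Fin.val_rev]; omega
  rw [hval] at hrev
  rw [Nat.succ_eq_add_one, hval'] at hrev'
  have hx := M.nul_add_r (orderingFlag π x)
  have hx' := M.nul_add_r (orderingFlag π (x + 1))
  rw [card_orderingFlag π x.isLt.le] at hx
  rw [card_orderingFlag π x.isLt] at hx'
  have := M.nul_orderingFlag_succ π x
  simp only [nullityJumps, mem_filter_univ] at this ⊢
  split_ifs at this <;> omega

lemma flagWeights_dual_comp_rev (M : MatroidRk n) (hl : M.r univ = l) (π : Fin n ≃ Fin n) :
    M.dual.flagWeights (M.nul_dual_univ.trans hl) (π.trans Fin.revPerm) ∘ Fin.rev =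
      (fun x : Fin n => n - x.val) ∘
        (M.nullityJumps π)ᶜ.orderEmbOfFin (M.card_nullityJumps_compl hl π) := by
  have emb_eq := orderEmbOfFin_unique
    (M.dual.card_nullityJumps (M.nul_dual_univ.trans hl) (π.trans Fin.revPerm))
    (f := fun i => ((M.nullityJumps π)ᶜ.orderEmbOfFin (M.card_nullityJumps_compl hl π) i.rev).rev)
    (fun i => (M.rev_mem_nullityJumps_dual_iff π _).2 (mem_compl.1 (orderEmbOfFin_mem _ _ _)))
    (fun i j hij => Fin.rev_lt_rev.2 ((orderEmbOfFin _ _).strictMono (Fin.rev_lt_rev.2 hij)))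
  funext i
  simp only [Function.comp_apply, flagWeights, ← emb_eq, Fin.rev_rev, Fin.val_rev]
  omega

lemma range_flagWeights_union_range_dual (M : MatroidRk n) (hk : M.nul univ = k)
    (hl : M.r univ = l) (π : Fin n ≃ Fin n) :
    Set.range (M.flagWeights hk π) ∪ Set.range (fun j =>
      n + 1 - M.dual.flagWeights (M.nul_dual_univ.trans hl) (π.trans Fin.revPerm) j) =
        Set.Icc 1 n := by
  let succVal (x : Fin n) : ℕ := x + 1
  have range_primal : Set.range (M.flagWeights hk π) = succVal '' M.nullityJumps π := by
    rw [← range_orderEmbOfFin _ (M.card_nullityJumps hk π), ← Set.range_comp]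
    rfl
  have range_dual : Set.range (fun j =>
      n + 1 - M.dual.flagWeights (M.nul_dual_univ.trans hl) (π.trans Fin.revPerm) j) =
        succVal '' (M.nullityJumps π : Set (Fin n))ᶜ := by
    rw [← coe_compl, ← range_orderEmbOfFin _ (M.card_nullityJumps_compl hl π), ← Set.range_comp,
      ← Fin.rev_surjective.range_comp]
    congr 1
    funext j
    have := congrFun (M.flagWeights_dual_comp_rev hl π) j
    simp only [Function.comp_apply, succVal] at this ⊢
    omega
  have range_succVal : Set.range succVal = Set.Icc 1 n := by
    ext m
    refine ⟨?_, fun hm => ⟨⟨m - 1, by grind⟩, Nat.sub_add_cancel hm.1⟩⟩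
    rintro ⟨x, rfl⟩
    exact ⟨Nat.le_add_left 1 x, x.isLt⟩
  rw [range_primal, range_dual, ← Set.image_union, Set.union_compl_self, Set.image_univ,
    range_succVal]

lemma exists_ordering_eq_flagWeights_and_dual (M : MatroidRk n) (hk : M.nul univ = k)
    (hl : M.r univ = l) {w : Fin k → ℕ} (hw : IsLexMin (M.eSet k) w) {v : Fin l → ℕ}
    (hv : IsRevLexMin (M.dual.eSet l) v) :
    ∃ π : Fin n ≃ Fin n, w = M.flagWeights hk π ∧
      v = M.dual.flagWeights (M.nul_dual_univ.trans hl) (π.trans Fin.revPerm) := by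
  obtain ⟨π, rfl⟩ := M.exists_eq_flagWeights_of_isLexMin hk hw
  obtain ⟨ρ', rfl⟩ := M.dual.exists_eq_flagWeights_of_isRevLexMin (M.nul_dual_univ.trans hl) hv
  obtain ⟨ρ, rfl⟩ : ∃ ρ : Fin n ≃ Fin n, ρ.trans Fin.revPerm = ρ' :=
    ⟨ρ'.trans Fin.revPerm, by ext; simp⟩
  have succ_strictMono : StrictMono fun x : Fin n => x.val + 1 := fun _ _ => Nat.succ_lt_succ
  have sub_strictAnti : StrictAnti fun x : Fin n => n - x.val := fun x y hxy => by grind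
  have jumps_le := (toLex_comp_le_iff_of_strictMono succ_strictMono).1
    (hw.2 _ (M.flagWeights_mem_eSet hk ρ))
  have dual_ge := hv.2 _
    (M.dual.flagWeights_mem_eSet (M.nul_dual_univ.trans hl) (π.trans Fin.revPerm))
  have dual_le :
      toLex (M.dual.flagWeights (M.nul_dual_univ.trans hl) (π.trans Fin.revPerm) ∘ Fin.rev) ≤
        toLex (M.dual.flagWeights (M.nul_dual_univ.trans hl) (ρ.trans Fin.revPerm) ∘ Fin.rev) := by
    rw [M.flagWeights_dual_comp_rev hl, M.flagWeights_dual_comp_rev hl,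
      toLex_comp_le_iff_of_strictAnti sub_strictAnti]
    exact toLex_orderEmbOfFin_compl_le (M.card_nullityJumps hk π) (M.card_nullityJumps hk ρ) _ _
      jumps_le
  exact ⟨π, rfl, Fin.rev_surjective.injective_comp_right
    (toLex.injective (dual_ge.antisymm dual_le))⟩

end MatroidRk

open MatroidRk in
/-- Wei duality for greedy weights of matroids: if `(e_1,…,e_k)` are the bottom-up
greedy weights of `M` and `(ẽ̄_1,…,ẽ̄_{n-k})` the top-down greedy weights of the dual matroid
`M̄`, then `{e_1,…,e_k} ∪ {n+1-ẽ̄_1,…,n+1-ẽ̄_{n-k}} = {1,…,n}`. -/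
theorem statement6 {n k : ℕ} (M : MatroidRk n) (hrk : M.r Finset.univ + k = n)
    (w : Fin k → ℕ) (hw : IsLexMin (M.eSet k) w)
    (v : Fin (n - k) → ℕ) (hv : IsRevLexMin (eSetDual M (n - k)) v) :
    {m : ℕ | ∃ i, w i = m} ∪ {m : ℕ | ∃ j, n + 1 - v j = m} = Set.Icc 1 n := by
  have hk : M.nul univ = k := by
    have := M.nul_add_r univ
    rw [card_fin] at this
    omega
  have hl : M.r univ = n - k := by omega
  obtain ⟨π, rfl, rfl⟩ := M.exists_ordering_eq_flagWeights_and_dual hk hl hw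
    (M.eSetDual_eq_eSet_dual ▸ hv)
  exact M.range_flagWeights_union_range_dual hk hl π
end

section
/- Let C be an [n,k] linear code over F_q, 1 ≤ i ≤ k, and let D ⊆ C be a bottom-up greedy i-subcode. Then Supp(D) ∈ N_i, i.e. Supp(D) is an inclusion-minimal subset of E of nullity i in the matroid M_C. -/
open Finset
open scoped Classical

noncomputable section

/-- The rank in the matroid `M_C`: `r(X)` is the rank of the column submatrix `H_X`. -/
def colRank {F : Type*} [Field F] {m n : ℕ} (H : Matrix (Fin m) (Fin n) F)
    (X : Finset (Fin n)) : ℕ :=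
  Module.finrank F (Submodule.span F ((fun j i => H i j) '' (X : Set (Fin n))))

/-- The nullity function of the matroid `M_C`: `n(X) = |X| - r(X)`. -/
def nulC {F : Type*} [Field F] {m n : ℕ} (H : Matrix (Fin m) (Fin n) F)
    (X : Finset (Fin n)) : ℕ :=
  X.card - colRank H X

/-- The support of a word. -/
def supp {F : Type*} [Field F] {n : ℕ} (c : Fin n → F) : Finset (Fin n) :=
  Finset.univ.filter (fun i => c i ≠ 0)

/-- The support of a subcode. -/
def suppD {F : Type*} [Field F] {n : ℕ} (D : Submodule F (Fin n → F)) : Finset (Fin n) :=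
  Finset.univ.filter (fun i => ∃ c ∈ D, c i ≠ 0)

/-- The weight of a subcode: the cardinality of its support. -/
def wt {F : Type*} [Field F] {n : ℕ} (D : Submodule F (Fin n → F)) : ℕ := (suppD D).card

/-- The subcode `C(X) = {c ∈ C : Supp(c) ⊆ X}`. -/
def codeRestrict {F : Type*} [Field F] {n : ℕ} (C : Submodule F (Fin n → F))
    (X : Finset (Fin n)) : Submodule F (Fin n → F) where
  carrier := {c | c ∈ C ∧ ∀ i ∉ X, c i = 0}
  add_mem' := by
    rintro a b ⟨ha, ha0⟩ ⟨hb, hb0⟩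
    exact ⟨C.add_mem ha hb, fun i hi => by simp [Pi.add_apply, ha0 i hi, hb0 i hi]⟩
  zero_mem' := ⟨C.zero_mem, fun i _ => rfl⟩
  smul_mem' := by
    rintro r a ⟨ha, ha0⟩
    exact ⟨C.smul_mem r ha, fun i hi => by simp [Pi.smul_apply, ha0 i hi]⟩

/-- The code defined by the parity check matrix `H`: `C = {x : H x = 0}`. -/
def codeOf {F : Type*} [Field F] {m n : ℕ} (H : Matrix (Fin m) (Fin n) F) :
    Submodule F (Fin n → F) :=
  LinearMap.ker H.mulVecLin

/-- The `r`-th generalized Hamming weight of a code `C`. -/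
def dC {F : Type*} [Field F] {n : ℕ} (C : Submodule F (Fin n → F)) (r : ℕ) : ℕ :=
  sInf {w | ∃ D : Submodule F (Fin n → F), D ≤ C ∧ Module.finrank F D = r ∧ wt D = w}

/-- `D` computes `d_r(C)`: `D ⊆ C`, `dim D = r` and `wt(D) = d_r(C)`. -/
def Computes {F : Type*} [Field F] {n : ℕ} (C : Submodule F (Fin n → F)) (r : ℕ)
    (D : Submodule F (Fin n → F)) : Prop :=
  D ≤ C ∧ Module.finrank F D = r ∧ wt D = dC C r

end
noncomputable section

/-- `BUG C i` is the set of bottom-up greedy `i`-subcodes of `C`: a bottom-up greedy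
`1`-subcode is a `1`-dimensional subcode of minimal weight, and a bottom-up greedy `r`-subcode
(`r ≥ 2`) is an `r`-dimensional subcode containing some bottom-up greedy `(r-1)`-subcode, of
minimal weight among all such. -/
def BUG {F : Type*} [Field F] {n : ℕ} (C : Submodule F (Fin n → F)) :
    ℕ → Set (Submodule F (Fin n → F))
  | 0 => {⊥}
  | 1 => {D | D ≤ C ∧ Module.finrank F D = 1 ∧
      ∀ D₂ ≤ C, Module.finrank F D₂ = 1 → wt D ≤ wt D₂}
  | (r+2) => {D | D ≤ C ∧ Module.finrank F D = r + 2 ∧ (∃ D' ∈ BUG C (r+1), D' ≤ D) ∧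
      ∀ D₂ ≤ C, Module.finrank F D₂ = r + 2 →
        (∃ D₂' ∈ BUG C (r+1), D₂' ≤ D₂) → wt D ≤ wt D₂}

/-!
Call a subcode `D` of `C` support-closed if it contains every codeword of `C` supported in
`Supp D`, that is, if `C(Supp D) = D`. Since the nullity of `X` is `dim C(X)`, any `Y ⊆ Supp D`
of nullity `dim D` satisfies `C(Y) = C(Supp D) = D`, so `Supp D ⊆ Y`: the support of a
support-closed subcode is minimal for its nullity.

Greedy subcodes are support-closed by induction. Let `D` be a lightest extension by one dimension
of a support-closed `D'`, and choose `x ∈ Supp D \ Supp D'`. If `C(Supp D)` were larger than `D`,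
then its subcode vanishing at `x`, which contains `D'` and has codimension at most one, would still
be larger than `D'`, and would contain an extension of `D'` lighter than `D`.
-/

section LinearAlgebra

open Module

variable {K V W : Type*} [DivisionRing K] [AddCommGroup V] [Module K V] [AddCommGroup W]
  [Module K W]

lemma finrank_map_add_finrank_inf_ker (f : V →ₗ[K] W) (A : Submodule K V) [FiniteDimensional K A] :
    finrank K (A.map f) + finrank K (A ⊓ LinearMap.ker f : Submodule K V) = finrank K A := by
  rw [← LinearMap.range_domRestrict, ← Submodule.map_comap_subtype, ← LinearMap.ker_domRestrict,
    Submodule.finrank_map_subtype_eq, LinearMap.finrank_range_add_finrank_ker]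

lemma exists_finrank_eq_succ_of_lt [FiniteDimensional K V] {A B : Submodule K V} (hAB : A < B) :
    ∃ A' ≤ B, A ≤ A' ∧ finrank K A' = finrank K A + 1 := by
  obtain ⟨hle, v, hvB, hvA⟩ := SetLike.lt_iff_le_and_exists.1 hAB
  exact ⟨A ⊔ Submodule.span K {v}, sup_le hle ((Submodule.span_singleton_le_iff_mem v B).2 hvB),
    le_sup_left, Submodule.finrank_sup_span_singleton hvA⟩

end LinearAlgebra

section Code

open Module

variable {F : Type*} [Field F] {m n : ℕ} {C D D' : Submodule F (Fin n → F)} {X Y : Finset (Fin n)}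

lemma mem_suppD {j : Fin n} : j ∈ suppD D ↔ ∃ c ∈ D, c j ≠ 0 :=
  Finset.mem_filter_univ j

lemma suppD_subset_iff : suppD D ⊆ X ↔ ∀ c ∈ D, ∀ j ∉ X, c j = 0 := by
  refine ⟨fun h c hc j hj => ?_, fun h j hj => ?_⟩
  · by_contra hcj
    exact hj (h (mem_suppD.2 ⟨c, hc, hcj⟩))
  · obtain ⟨c, hc, hcj⟩ := mem_suppD.1 hj
    by_contra hjX
    exact hcj (h c hc j hjX)

lemma suppD_mono (h : D' ≤ D) : suppD D' ⊆ suppD D := fun _ hj =>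
  let ⟨c, hc, hcj⟩ := mem_suppD.1 hj
  mem_suppD.2 ⟨c, h hc, hcj⟩

lemma codeRestrict_eq_inf_spanSubset (C : Submodule F (Fin n → F)) (X : Finset (Fin n)) :
    codeRestrict C X = C ⊓ Pi.spanSubset F (X : Set (Fin n)) := by
  ext c
  exact and_congr_right fun _ => Pi.mem_spanSubset_iff.symm

lemma le_codeRestrict_iff : D ≤ codeRestrict C X ↔ D ≤ C ∧ suppD D ⊆ X := by
  rw [suppD_subset_iff]
  exact forall₂_and

lemma codeRestrict_mono (C : Submodule F (Fin n → F)) (h : X ⊆ Y) :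
    codeRestrict C X ≤ codeRestrict C Y := fun _ hc =>
  ⟨hc.1, fun j hj => hc.2 j fun hjX => hj (h hjX)⟩

lemma codeRestrict_erase (C : Submodule F (Fin n → F)) (X : Finset (Fin n)) (x : Fin n) :
    codeRestrict C (X.erase x) = codeRestrict C X ⊓ LinearMap.ker (LinearMap.proj x) := by
  ext c
  constructor
  · exact fun hc => ⟨codeRestrict_mono C (X.erase_subset x) hc, hc.2 x (X.notMem_erase x)⟩
  · rintro ⟨⟨hcC, hcX⟩, hcx⟩
    refine ⟨hcC, fun j hj => ?_⟩
    obtain rfl | hjx := eq_or_ne j x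
    · exact hcx
    · exact hcX j fun hjX => hj (Finset.mem_erase.2 ⟨hjx, hjX⟩)

lemma finrank_codeRestrict_le_finrank_codeRestrict_erase_add_one
    (C : Submodule F (Fin n → F)) (X : Finset (Fin n)) (x : Fin n) :
    finrank F (codeRestrict C X) ≤ finrank F (codeRestrict C (X.erase x)) + 1 := by
  have hrank := finrank_map_add_finrank_inf_ker
    (LinearMap.proj x : (Fin n → F) →ₗ[F] F) (codeRestrict C X)
  have hone : finrank F ((codeRestrict C X).map (LinearMap.proj x : (Fin n → F) →ₗ[F] F)) ≤ 1 :=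
    (Submodule.finrank_le _).trans_eq (finrank_self F)
  rw [codeRestrict_erase]
  omega

lemma colRank_eq_finrank_map_spanSubset (H : Matrix (Fin m) (Fin n) F) (X : Finset (Fin n)) :
    colRank H X = finrank F ((Pi.spanSubset F (X : Set (Fin n))).map H.mulVecLin) := by
  have hcols : H.mulVecLin ∘ Pi.basisFun F (Fin n) = fun j i => H i j := by
    funext j
    rw [Function.comp_apply, Pi.basisFun_apply, Matrix.mulVecLin_apply, Matrix.mulVec_single_one]
    rfl
  rw [colRank, Pi.spanSubset, Submodule.map_span, ← Set.image_comp, hcols]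

theorem nulC_eq_finrank_codeRestrict (H : Matrix (Fin m) (Fin n) F) (X : Finset (Fin n)) :
    nulC H X = finrank F (codeRestrict (codeOf H) X) := by
  have hrank := finrank_map_add_finrank_inf_ker H.mulVecLin (Pi.spanSubset F (X : Set (Fin n)))
  rw [Pi.dim_spanSubset, Set.ncard_coe_finset, ← colRank_eq_finrank_map_spanSubset] at hrank
  rw [nulC, codeRestrict_eq_inf_spanSubset, inf_comm, codeOf]
  omega

/-- `D` is a support-closed subcode of `C`: it consists of all the codewords of `C` supported in
`Supp D`. Equivalently, `D` is a closed element of the Galois connection between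
`D ↦ Supp D` and `X ↦ C(X)`; in particular `D ≤ C`. -/
def IsSupportClosed (C D : Submodule F (Fin n → F)) : Prop :=
  codeRestrict C (suppD D) = D

namespace IsSupportClosed

lemma codeRestrict_suppD (hD : IsSupportClosed C D) : codeRestrict C (suppD D) = D := hD

lemma le (hD : IsSupportClosed C D) : D ≤ C :=
  (le_codeRestrict_iff.1 hD.codeRestrict_suppD.ge).1

lemma le_iff_suppD_subset (hD : IsSupportClosed C D) (hD' : D' ≤ C) :
    D' ≤ D ↔ suppD D' ⊆ suppD D :=
  ⟨suppD_mono, fun h => (le_codeRestrict_iff.2 ⟨hD', h⟩).trans hD.codeRestrict_suppD.le⟩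

lemma bot (C : Submodule F (Fin n → F)) : IsSupportClosed C ⊥ :=
  (Submodule.eq_bot_iff _).2 fun c hc => funext fun j => hc.2 j <| by simp [mem_suppD]

theorem of_minimal_wt (hD' : IsSupportClosed C D') (hDC : D ≤ C) (hD'D : D' ≤ D)
    (hrank : finrank F D = finrank F D' + 1)
    (hmin : ∀ E ≤ C, finrank F E = finrank F D' + 1 → D' ≤ E → wt D ≤ wt E) :
    IsSupportClosed C D := by
  have hle : D ≤ codeRestrict C (suppD D) := le_codeRestrict_iff.2 ⟨hDC, subset_rfl⟩
  by_contra hne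
  have hlarge : finrank F D < finrank F (codeRestrict C (suppD D)) :=
    Submodule.finrank_lt_finrank_of_lt (hle.lt_of_ne' hne)
  obtain ⟨x, hxD, hxD'⟩ : ∃ x ∈ suppD D, x ∉ suppD D' := by
    refine Finset.not_subset.1 fun hsub => ?_
    have := Submodule.finrank_mono ((hD'.le_iff_suppD_subset hDC).2 hsub)
    omega
  have hD'x : D' ≤ codeRestrict C ((suppD D).erase x) :=
    le_codeRestrict_iff.2 ⟨hD'.le, Finset.subset_erase.2 ⟨suppD_mono hD'D, hxD'⟩⟩
  have hlt : D' < codeRestrict C ((suppD D).erase x) := by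
    refine hD'x.lt_of_ne fun heq => ?_
    have := finrank_codeRestrict_le_finrank_codeRestrict_erase_add_one C (suppD D) x
    rw [← heq] at this
    omega
  obtain ⟨E, hEx, hD'E, hE⟩ := exists_finrank_eq_succ_of_lt hlt
  obtain ⟨hEC, hsupp⟩ := le_codeRestrict_iff.1 hEx
  have hlight : wt E < wt D :=
    (Finset.card_le_card hsupp).trans_lt (Finset.card_erase_lt_of_mem hxD)
  exact hlight.not_ge (hmin E hEC hE hD'E)

lemma nulC_suppD {H : Matrix (Fin m) (Fin n) F} (hD : IsSupportClosed (codeOf H) D) :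
    nulC H (suppD D) = finrank F D := by
  rw [nulC_eq_finrank_codeRestrict, hD.codeRestrict_suppD]

theorem minimal_nulC {H : Matrix (Fin m) (Fin n) F} (hD : IsSupportClosed (codeOf H) D) :
    Minimal (fun X => nulC H X = finrank F D) (suppD D) := by
  refine ⟨hD.nulC_suppD, fun Y hnul hY => ?_⟩
  have hrank : finrank F (codeRestrict (codeOf H) Y) = finrank F D :=
    (nulC_eq_finrank_codeRestrict H Y).symm.trans hnul
  have hle : codeRestrict (codeOf H) Y ≤ D :=
    (codeRestrict_mono _ hY).trans hD.codeRestrict_suppD.le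
  have heq : codeRestrict (codeOf H) Y = D := Submodule.eq_of_le_of_finrank_eq hle hrank
  exact (le_codeRestrict_iff.1 heq.ge).2

end IsSupportClosed

lemma mem_BUG_succ_iff {r : ℕ} : D ∈ BUG C (r + 1) ↔
    D ≤ C ∧ finrank F D = r + 1 ∧ (∃ D' ∈ BUG C r, D' ≤ D) ∧
      ∀ E ≤ C, finrank F E = r + 1 → (∃ D' ∈ BUG C r, D' ≤ E) → wt D ≤ wt E := by
  cases r with
  | zero => simp [BUG]
  | succ r => rfl

lemma finrank_of_mem_BUG {r : ℕ} (hD : D ∈ BUG C r) : finrank F D = r := by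
  cases r with
  | zero => rw [show D = ⊥ from hD, finrank_bot]
  | succ r => exact (mem_BUG_succ_iff.1 hD).2.1

theorem isSupportClosed_of_mem_BUG {r : ℕ} (hD : D ∈ BUG C r) : IsSupportClosed C D := by
  induction r generalizing D with
  | zero =>
    obtain rfl : D = ⊥ := hD
    exact .bot C
  | succ r ih =>
    obtain ⟨hDC, hrank, ⟨D', hD', hD'D⟩, hmin⟩ := mem_BUG_succ_iff.1 hD
    rw [← finrank_of_mem_BUG hD'] at hrank hmin
    refine (ih hD').of_minimal_wt hDC hD'D hrank fun E hEC hE hD'E => hmin E hEC hE ?_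
    exact ⟨D', by rwa [finrank_of_mem_BUG hD'], hD'E⟩

theorem statement11_general (H : Matrix (Fin m) (Fin n) F) {i : ℕ} (hD : D ∈ BUG (codeOf H) i) :
    Minimal (fun X => nulC H X = i) (suppD D) := by
  simpa only [finrank_of_mem_BUG hD] using (isSupportClosed_of_mem_BUG hD).minimal_nulC

end Code

/-- if `D` is a bottom-up greedy `i`-subcode of an `[n,k]` code `C`
(`1 ≤ i ≤ k`), then `Supp(D) ∈ N_i`: `Supp(D)` is inclusion-minimal among the subsets of
nullity `i` in the matroid `M_C`. -/
theorem statement11 {F : Type*} [Field F] [Fintype F] {m k n : ℕ} (hmk : m + k = n)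
    (H : Matrix (Fin m) (Fin n) F) (hH : H.rank = m)
    (i : ℕ) (hi1 : 1 ≤ i) (hik : i ≤ k)
    (D : Submodule F (Fin n → F)) (hD : D ∈ BUG (codeOf H) i) :
    nulC H (suppD D) = i ∧ ∀ Y ⊆ suppD D, nulC H Y = i → Y = suppD D := by
  have hmin := statement11_general H hD
  exact ⟨hmin.prop, fun Y hY hnul => hmin.eq_of_le hnul hY⟩

end
end
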